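/- Let (V,∘) be a Novikov algebra over ℂ (possibly infinite-dimensional, with trivial Lie bracket) such that either (V,∘) is simple, or there exists x ∈ V and k ∈ ℂ∖{0} with b∘x = k·b for all b ∈ V. Let (d^i)_{i∈ℕ} be a family of linear maps from V into the space of polynomial maps ℂ → V such that for each a ∈ V one has d^i_λ(a) = 0 for all but finitely many i, and suppose the family satisfies the Novikov conformal derivation equation (E₀). Then d^i = 0 for all i > 3, and d^0, d^1, d^2, d^3 satisfy identities (D1)–(D13) with the Lie bracket taken to be zero, for all a, b ∈ V and λ ∈ ℂ. -/

import Mathlib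

/-- The identities (D1)–(D13) of Theorem 4.3(2) for maps `d^0, d^1, d^2, d^3`
(given as `d 0, d 1, d 2, d 3`) on the Gel'fand–Dorfman bialgebra `(V, circ, br)`. -/
def DIdentities {V : Type*} [AddCommGroup V] [Module ℂ V]
    (circ br : V →ₗ[ℂ] V →ₗ[ℂ] V) (d : ℕ → V →ₗ[ℂ] (ℂ → V)) : Prop :=
  ∀ (a b : V) (l : ℂ),
    -- (D1)
    (d 3 (circ b a) l = d 3 (circ a b) l ∧ d 3 (circ a b) l = circ (d 3 b l) a)
    -- (D2)
    ∧ circ b (d 3 a l) = circ a (d 3 b l)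
    -- (D3)
    ∧ (2 : ℂ) • circ (d 3 b l) a + circ a (d 3 b l) = 0
    -- (D4)
    ∧ l • d 3 (circ b a) l + d 2 (circ b a) l + d 3 (br b a) l
        = br (d 3 b l) a + circ (d 2 b l) a
    -- (D5)
    ∧ d 2 (circ a b + circ b a) l
        = (2 : ℂ) • circ (d 2 b l) a + (circ (d 2 b l) a + circ a (d 2 b l))
          + (3 : ℂ) • br (d 3 b l) a
    -- (D6)
    ∧ (-(3 * l)) • circ b (d 3 a l) + circ b (d 2 a l) + circ (d 2 b l) a
        + (2 : ℂ) • (circ (d 2 b l) a + circ a (d 2 b l))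
        + (3 : ℂ) • br (d 3 b l) a = 0
    -- (D7)
    ∧ (-(4 * l)) • (circ (d 3 a l) b + circ b (d 3 a l))
        + (circ (d 2 a l) b + circ b (d 2 a l)) - br b (d 3 a l)
        + (circ (d 2 b l) a + circ a (d 2 b l)) + br (d 3 b l) a = 0
    -- (D8)
    ∧ l • d 2 (circ b a) l + d 1 (circ b a) l + d 2 (br b a) l
        = circ (d 1 b l) a + br (d 2 b l) a
    -- (D9)
    ∧ d 1 (circ a b + circ b a) l
        = (∑ i ∈ Finset.Icc (1 : ℕ) 3, ((-1 : ℂ) ^ i * l ^ (i - 1)) • circ b (d i a l))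
          + circ (d 1 b l) a + (circ (d 1 b l) a + circ a (d 1 b l))
          + (2 : ℂ) • br (d 2 b l) a
    -- (D10)
    ∧ (∑ i ∈ Finset.Icc (1 : ℕ) 3, ((-1 : ℂ) ^ i * (Nat.choose (i + 1) 2 : ℂ) * l ^ (i - 1)) •
          (circ (d i a l) b + circ b (d i a l)))
        + (∑ i ∈ Finset.Icc (2 : ℕ) 3, ((-1 : ℂ) ^ i * (Nat.choose i 2 : ℂ) * l ^ (i - 2)) •
          br b (d i a l))
        + (circ (d 1 b l) a + circ a (d 1 b l)) + br (d 2 b l) a = 0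
    -- (D11)
    ∧ l • d 1 (circ b a) l + d 0 (circ b a) l + d 1 (br b a) l
        = (∑ i ∈ Finset.range 4, ((-1 : ℂ) ^ i * l ^ i) • circ b (d i a l))
          + circ (d 0 b l) a + br (d 1 b l) a
    -- (D12)
    ∧ d 0 (circ a b + circ b a) l
        = (∑ i ∈ Finset.range 4, ((-1 : ℂ) ^ i * ((i : ℂ) + 1) * l ^ i) •
            (circ (d i a l) b + circ b (d i a l)))
          + (∑ i ∈ Finset.Icc (1 : ℕ) 3, ((-1 : ℂ) ^ i * (i : ℂ) * l ^ (i - 1)) • br b (d i a l))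
          + (circ (d 0 b l) a + circ a (d 0 b l)) + br (d 1 b l) a
    -- (D13)
    ∧ l • d 0 (circ b a) l + d 0 (br b a) l
        = (∑ i ∈ Finset.range 4, ((-1 : ℂ) ^ i * l ^ (i + 1)) •
            (circ (d i a l) b + circ b (d i a l)))
          + (∑ i ∈ Finset.range 4, ((-1 : ℂ) ^ i * l ^ i) • br b (d i a l))
          + br (d 0 b l) a

/-- The Novikov conformal derivation equation (E₀) for a pointwise finitely supported
family `(d^i)_{i∈ℕ}` of linear maps from `V` into maps `ℂ → V`, on the quadratic Lie
conformal algebra of the Novikov algebra `(V, circ)` (with trivial Lie bracket);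
the formal variable `∂` is evaluated at `x : ℂ`. -/
def ConfDerEqNov {V : Type*} [AddCommGroup V] [Module ℂ V]
    (circ : V →ₗ[ℂ] V →ₗ[ℂ] V) (d : ℕ → V →ₗ[ℂ] (ℂ → V)) : Prop :=
  ∀ (a b : V) (l m x : ℂ),
    (x + l) • (∑ᶠ i : ℕ, x ^ i • d i (circ b a) l)
      + m • (∑ᶠ i : ℕ, x ^ i • d i (circ a b + circ b a) l)
    = (∑ᶠ i : ℕ, (-l - m) ^ i •
        (x • circ b (d i a l) + (l + m) • (circ (d i a l) b + circ b (d i a l))))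
      + (∑ᶠ i : ℕ, (m + x) ^ i •
        (x • circ (d i b l) a + m • (circ (d i b l) a + circ a (d i b l))))

/-- `(V, circ)` is a simple Novikov algebra: it has only the trivial ideals and the
product is not identically zero. -/
def NovikovSimple {V : Type*} [AddCommGroup V] [Module ℂ V]
    (circ : V →ₗ[ℂ] V →ₗ[ℂ] V) : Prop :=
  (∃ a b : V, circ a b ≠ 0)
    ∧ ∀ I : Submodule ℂ V,
        (∀ a ∈ I, ∀ b : V, circ a b ∈ I ∧ circ b a ∈ I) → I = ⊥ ∨ I = ⊤

theorem aux_scalar (l : ℂ) (A S P Q R T : ℕ → ℂ) (N : ℕ)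
    (h : ∀ m x : ℂ, (x + l) * (∑ i ∈ Finset.range N, x ^ i * A i)
      + m * (∑ i ∈ Finset.range N, x ^ i * S i)
      = (∑ i ∈ Finset.range N, (-l - m) ^ i * (x * P i + (l + m) * Q i))
       + (∑ i ∈ Finset.range N, (m + x) ^ i * (x * R i + m * T i)))
    (j k : ℕ) (hN : j + k + 3 < N) :
    R (j + k + 3) * ((j + k + 3).choose (j + 1) : ℂ)
      + T (j + k + 3) * ((j + k + 3).choose (j + 2) : ℂ) = 0 := by
  open Polynomial in
  have h1 : ∀ m : ℂ, (X + C l) * (∑ i ∈ Finset.range N, C (A i) * X ^ i)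
      + C m * (∑ i ∈ Finset.range N, C (S i) * X ^ i)
      = (∑ i ∈ Finset.range N, C ((-l - m) ^ i) * (C (P i) * X + C ((l + m) * Q i)))
       + (∑ i ∈ Finset.range N, ((C (R i) * (X + C m) ^ i) * X
          + C (m * T i) * (X + C m) ^ i)) := by
    intro m
    apply Polynomial.funext
    intro x
    have := h m x
    simp only [eval_add, eval_mul, eval_finsetSum, eval_pow, eval_X, eval_C]
    convert this using 2
    · congr 1
      exact Finset.sum_congr rfl fun i _ => by ring
    · congr 1
      exact Finset.sum_congr rfl fun i _ => by ring
    · exact Finset.sum_congr rfl fun i _ => by ring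
    · exact Finset.sum_congr rfl fun i _ => by ring
  open Polynomial in
  obtain ⟨α, β, h2⟩ : ∃ α β : ℂ, ∀ m : ℂ, α + m * β = ∑ i ∈ Finset.range N,
      (R i * (m ^ (i - (j + 1)) * (i.choose (j + 1) : ℂ))
        + m * T i * (m ^ (i - (j + 2)) * (i.choose (j + 2) : ℂ))) := by
    refine ⟨((X + C l) * (∑ i ∈ Finset.range N, C (A i) * X ^ i)).coeff (j + 2),
      (∑ i ∈ Finset.range N, C (S i) * X ^ i).coeff (j + 2), fun m => ?_⟩
    have h3 := congrArg (fun p : ℂ[X] => p.coeff (j + 2)) (h1 m)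
    simp only [coeff_add] at h3
    rw [coeff_C_mul] at h3
    rw [h3, finsetSum_coeff, finsetSum_coeff, Finset.sum_eq_zero, zero_add]
    · refine Finset.sum_congr rfl fun i _ => ?_
      rw [coeff_add, coeff_mul_X, coeff_C_mul, coeff_C_mul, coeff_X_add_C_pow,
        coeff_X_add_C_pow]
    · intro i _
      rw [coeff_C_mul, coeff_add, coeff_C_mul, coeff_X, coeff_C]
      simp
  open Polynomial in
  have h4 : C α + C β * X = ∑ i ∈ Finset.range N,
      (C (R i * (i.choose (j + 1) : ℂ)) * X ^ (i - (j + 1))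
        + C (T i * (i.choose (j + 2) : ℂ)) * X ^ (i - (j + 2) + 1)) := by
    apply Polynomial.funext
    intro m
    have := h2 m
    simp only [eval_add, eval_mul, eval_finsetSum, eval_pow, eval_X, eval_C]
    rw [mul_comm β m, this]
    exact Finset.sum_congr rfl fun i _ => by ring
  open Polynomial in
  have h5 := congrArg (fun p : ℂ[X] => p.coeff (k + 2)) h4
  simp only [Polynomial.coeff_add, Polynomial.finsetSum_coeff,
    Polynomial.coeff_C_mul_X_pow] at h5
  rw [Finset.sum_eq_single (j + k + 3)] at h5
  · rw [if_pos (by omega), if_pos (by omega)] at h5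
    rw [← h5]
    simp [Polynomial.coeff_C, Polynomial.coeff_X]
  · intro i _ hi
    rw [if_neg (by omega), zero_add]
    split_ifs with hc
    · omega
    · rfl
  · intro hn
    exact absurd (Finset.mem_range.2 hN) hn

theorem aux_scalar' (l : ℂ) (A S P Q R T : ℕ → ℂ) (N : ℕ)
    (h : ∀ m x : ℂ, (x + l) * (∑ i ∈ Finset.range N, x ^ i * A i)
      + m * (∑ i ∈ Finset.range N, x ^ i * S i)
      = (∑ i ∈ Finset.range N, (-l - m) ^ i * (x * P i + (l + m) * Q i))
       + (∑ i ∈ Finset.range N, (m + x) ^ i * (x * R i + m * T i)))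
    (n : ℕ) (hN : n + 4 < N) : R (n + 4) = 0 ∧ T (n + 4) = 0 := by
  have e1 := aux_scalar l A S P Q R T N h (n + 1) 0 (by omega)
  have e2 := aux_scalar l A S P Q R T N h n 1 (by omega)
  have c0 : (n + 4).choose (n + 3) = n + 4 := by
    rw [← Nat.choose_symm_of_eq_add (a := 1) (by omega)]; simp
  have c1 : ((n + 4).choose (n + 2) : ℂ) = (n + 4) * (n + 3) / 2 := by
    rw [← Nat.choose_symm_of_eq_add (a := 2) (by omega), Nat.cast_choose_two]; push_cast; ring
  have c2 : ((n + 4).choose (n + 1) : ℂ) = (n + 4) * (n + 3) * (n + 2) / 6 := by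
    rw [← Nat.choose_symm_of_eq_add (a := 3) (by omega)]
    have := Nat.add_one_mul_choose_eq (n + 3) 2
    have h3 : ((n + 3 : ℕ) + 1 : ℂ) * ((n + 3).choose 2 : ℂ) = ((n + 4).choose 3 : ℂ) * 3 := by
      exact_mod_cast this
    rw [Nat.cast_choose_two] at h3
    push_cast at h3
    linear_combination (-1 / 3 : ℂ) * h3
  rw [show n + 1 + 0 + 3 = n + 4 by ring, show n + 1 + 1 = n + 2 by ring,
    show n + 1 + 2 = n + 3 by ring, c0, c1] at e1
  rw [show n + 1 + 3 = n + 4 by ring, c1, c2] at e2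
  push_cast at e1
  have n3 : (n + 3 : ℂ) ≠ 0 := by exact_mod_cast (by omega : n + 3 ≠ 0)
  have n4 : (n + 4 : ℂ) ≠ 0 := by exact_mod_cast (by omega : n + 4 ≠ 0)
  have n5 : (n + 5 : ℂ) ≠ 0 := by exact_mod_cast (by omega : n + 5 ≠ 0)
  have f1 : R (n + 4) * (n + 3) / 2 + T (n + 4) = 0 :=
    mul_left_cancel₀ n4 (by linear_combination e1)
  have f2 : R (n + 4) * (n + 2) / 3 + T (n + 4) = 0 :=
    mul_left_cancel₀ n4 (mul_left_cancel₀ n3 (by linear_combination 2 * e2))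
  have f3 : R (n + 4) = 0 := mul_left_cancel₀ n5 (by linear_combination 6 * f1 - 6 * f2)
  refine ⟨f3, ?_⟩
  rw [f3] at f1
  simpa using f1

theorem aux_poly5 {V : Type*} [AddCommGroup V] [Module ℂ V] (c0 c1 c2 c3 c4 : V)
    (h : ∀ x : ℂ, c0 + x • c1 + x ^ 2 • c2 + x ^ 3 • c3 + x ^ 4 • c4 = 0) :
    c0 = 0 ∧ c1 = 0 ∧ c2 = 0 ∧ c3 = 0 ∧ c4 = 0 := by
  have h0 := h 0
  have h1 := h 1
  have h2 := h (-1)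
  have h3 := h 2
  have h4 := h (-2)
  refine ⟨?_, ?_, ?_, ?_, ?_⟩
  · linear_combination (norm := module) h0
  · linear_combination (norm := module) (2 / 3 : ℂ) • h1 - (2 / 3 : ℂ) • h2 - (1 / 12 : ℂ) • h3
      + (1 / 12 : ℂ) • h4
  · linear_combination (norm := module) (-5 / 4 : ℂ) • h0 + (2 / 3 : ℂ) • h1 + (2 / 3 : ℂ) • h2
      - (1 / 24 : ℂ) • h3 - (1 / 24 : ℂ) • h4
  · linear_combination (norm := module) (-1 / 6 : ℂ) • h1 + (1 / 6 : ℂ) • h2 + (1 / 12 : ℂ) • h3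
      - (1 / 12 : ℂ) • h4
  · linear_combination (norm := module) (1 / 4 : ℂ) • h0 - (1 / 6 : ℂ) • h1 - (1 / 6 : ℂ) • h2
      + (1 / 24 : ℂ) • h3 + (1 / 24 : ℂ) • h4

/-- coefficient comparison once only `d^0, …, d^3` are left -/
theorem aux_coeffs {V : Type*} [AddCommGroup V] [Module ℂ V] (l : ℂ) (A S P Q R T : ℕ → V)
    (h : ∀ m x : ℂ, (x + l) • (∑ i ∈ Finset.range 4, x ^ i • A i)
      + m • (∑ i ∈ Finset.range 4, x ^ i • S i)
      = (∑ i ∈ Finset.range 4, (-l - m) ^ i • (x • P i + (l + m) • Q i))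
       + (∑ i ∈ Finset.range 4, (m + x) ^ i • (x • R i + m • T i))) :
    (A 3 - R 3 = 0 ∧ S 3 - (3 : ℂ) • R 3 - T 3 = 0 ∧ R 3 + T 3 = 0
      ∧ - P 3 + R 3 + (3 : ℂ) • T 3 = 0 ∧ Q 3 - T 3 = 0)
    ∧ (l • A 3 + A 2 - R 2 = 0 ∧ S 2 - (2 : ℂ) • R 2 - T 2 = 0
      ∧ P 2 - (3 * l) • P 3 + R 2 + (2 : ℂ) • T 2 = 0
      ∧ Q 2 - (4 * l) • Q 3 + T 2 = 0)
    ∧ (l • A 2 + A 1 - R 1 = 0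
      ∧ S 1 - (- P 1 + (2 * l) • P 2 - (3 * l ^ 2) • P 3 + R 1 + T 1) = 0
      ∧ - Q 1 + (3 * l) • Q 2 - (6 * l ^ 2) • Q 3 + T 1 = 0)
    ∧ (l • A 1 + A 0 - (P 0 - l • P 1 + l ^ 2 • P 2 - l ^ 3 • P 3 + R 0) = 0
      ∧ S 0 - (Q 0 - (2 * l) • Q 1 + (3 * l ^ 2) • Q 2 - (4 * l ^ 3) • Q 3 + T 0) = 0)
    ∧ l • A 0 - (l • Q 0 - l ^ 2 • Q 1 + l ^ 3 • Q 2 - l ^ 4 • Q 3) = 0 := by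
  simp only [Finset.sum_range_succ, Finset.sum_range_zero] at h
  have hx := fun m : ℂ => aux_poly5
    ((l • A 0 - (l • Q 0 - l ^ 2 • Q 1 + l ^ 3 • Q 2 - l ^ 4 • Q 3))
      + m • (S 0 - (Q 0 - (2 * l) • Q 1 + (3 * l ^ 2) • Q 2 - (4 * l ^ 3) • Q 3 + T 0))
      + m ^ 2 • (-(- Q 1 + (3 * l) • Q 2 - (6 * l ^ 2) • Q 3 + T 1))
      + m ^ 3 • (-(Q 2 - (4 * l) • Q 3 + T 2))
      + m ^ 4 • (Q 3 - T 3))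
    ((l • A 1 + A 0 - (P 0 - l • P 1 + l ^ 2 • P 2 - l ^ 3 • P 3 + R 0))
      + m • (S 1 - (- P 1 + (2 * l) • P 2 - (3 * l ^ 2) • P 3 + R 1 + T 1))
      + m ^ 2 • (-(P 2 - (3 * l) • P 3 + R 2 + (2 : ℂ) • T 2))
      + m ^ 3 • (-(- P 3 + R 3 + (3 : ℂ) • T 3)) + m ^ 4 • (0 : V))
    ((l • A 2 + A 1 - R 1) + m • (S 2 - (2 : ℂ) • R 2 - T 2)
      + m ^ 2 • ((-3 : ℂ) • (R 3 + T 3)) + m ^ 3 • (0 : V) + m ^ 4 • (0 : V))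
    ((l • A 3 + A 2 - R 2) + m • (S 3 - (3 : ℂ) • R 3 - T 3)
      + m ^ 2 • (0 : V) + m ^ 3 • (0 : V) + m ^ 4 • (0 : V))
    (A 3 - R 3)
    (fun x => by linear_combination (norm := module) h m x)
  have y0 := aux_poly5 _ _ _ _ _ fun m => (hx m).1
  have y1 := aux_poly5 _ _ _ _ _ fun m => (hx m).2.1
  have y2 := aux_poly5 _ _ _ _ _ fun m => (hx m).2.2.1
  have y3 := aux_poly5 _ _ _ _ _ fun m => (hx m).2.2.2.1
  have y4 := (hx 0).2.2.2.2
  obtain ⟨y00, y01, y02, y03, y04⟩ := y0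
  obtain ⟨y10, y11, y12, y13, -⟩ := y1
  obtain ⟨y20, y21, y22, -, -⟩ := y2
  obtain ⟨y30, y31, -, -, -⟩ := y3
  have y22' : R 3 + T 3 = 0 := (smul_eq_zero.1 y22).resolve_left (by norm_num)
  exact ⟨⟨y4, y31, y22', neg_eq_zero.1 y13, y04⟩,
    ⟨y30, y21, neg_eq_zero.1 y12, neg_eq_zero.1 y03⟩,
    ⟨y20, y11, neg_eq_zero.1 y02⟩, ⟨y10, y01⟩, y00⟩

/-- the finite form of the equation -/
theorem aux_fin {V : Type*} [AddCommGroup V] [Module ℂ V]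
    (circ : V →ₗ[ℂ] V →ₗ[ℂ] V) (d : ℕ → V →ₗ[ℂ] (ℂ → V)) (hE : ConfDerEqNov circ d)
    (a b : V) (l : ℂ) (N : ℕ)
    (h1 : ∀ i, N ≤ i → d i (circ b a) = 0) (h2 : ∀ i, N ≤ i → d i (circ a b + circ b a) = 0)
    (h3 : ∀ i, N ≤ i → d i a = 0) (h4 : ∀ i, N ≤ i → d i b = 0) (m x : ℂ) :
    (x + l) • (∑ i ∈ Finset.range N, x ^ i • d i (circ b a) l)
      + m • (∑ i ∈ Finset.range N, x ^ i • d i (circ a b + circ b a) l)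
    = (∑ i ∈ Finset.range N, (-l - m) ^ i •
        (x • circ b (d i a l) + (l + m) • (circ (d i a l) b + circ b (d i a l))))
      + (∑ i ∈ Finset.range N, (m + x) ^ i •
        (x • circ (d i b l) a + m • (circ (d i b l) a + circ a (d i b l)))) := by
  have key : ∀ f : ℕ → V, (∀ i, N ≤ i → f i = 0) →
      ∑ᶠ i, f i = ∑ i ∈ Finset.range N, f i := by
    intro f hf
    apply finsum_eq_sum_of_support_subset
    intro i hi
    by_contra hc
    exact hi (hf i (by simpa using hc))
  have := hE a b l m x
  rw [key _ (fun i hi => by simp [h1 i hi]), key _ (fun i hi => by rw [h2 i hi]; simp),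
    key _ (fun i hi => by simp [h3 i hi]), key _ (fun i hi => by simp [h4 i hi])] at this
  exact this

theorem aux_ann {V : Type*} [AddCommGroup V] [Module ℂ V]
    (circ : V →ₗ[ℂ] V →ₗ[ℂ] V)
    (hcase : NovikovSimple circ
      ∨ ∃ (x : V) (k : ℂ), k ≠ 0 ∧ ∀ b : V, circ b x = k • b)
    (v : V) (hl : ∀ a, circ v a = 0) (hr : ∀ a, circ a v = 0) : v = 0 := by
  rcases hcase with ⟨⟨p, q, hpq⟩, hs⟩ | ⟨x, k, hk, hx⟩
  · have := hs
      { carrier := {w | ∀ a, circ w a = 0 ∧ circ a w = 0}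
        add_mem' := fun {u w} hu hw a => by simp [(hu a).1, (hu a).2, (hw a).1, (hw a).2]
        zero_mem' := fun a => by simp
        smul_mem' := fun c w hw a => by simp [(hw a).1, (hw a).2] }
      (fun a ha b => by
        have e1 : circ a b = 0 := (ha b).1
        have e2 : circ b a = 0 := (ha b).2
        rw [e1, e2]; exact ⟨Submodule.zero_mem _, Submodule.zero_mem _⟩)
    rcases this with h | h
    · rw [Submodule.eq_bot_iff] at h
      exact h v fun a => ⟨hl a, hr a⟩
    · rw [Submodule.eq_top_iff'] at h
      exact absurd (h p q).1 hpq
  · have := hl x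
    rw [hx] at this
    exact (smul_eq_zero.1 this).resolve_left hk

/-- a linear map whose kernel and image are ideals of a simple algebra is zero or injective -/
theorem aux_simple {V : Type*} [AddCommGroup V] [Module ℂ V]
    (circ : V →ₗ[ℂ] V →ₗ[ℂ] V) (hs : NovikovSimple circ) (D : V →ₗ[ℂ] V)
    (h : ∀ b, D b = 0 → ∀ a, D (circ b a) = 0 ∧ D (circ a b) = 0) :
    D = 0 ∨ ∀ v, D v = 0 → v = 0 := by
  rcases hs.2 (LinearMap.ker D) (fun a ha b => by
    simp only [LinearMap.mem_ker] at ha ⊢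
    exact h a ha b) with h | h
  · right
    intro v hv
    rw [Submodule.eq_bot_iff] at h
    exact h v hv
  · left
    exact LinearMap.ker_eq_top.1 h

theorem aux_D3 {V : Type*} [AddCommGroup V] [Module ℂ V]
    (circ : V →ₗ[ℂ] V →ₗ[ℂ] V) (hs : NovikovSimple circ) (D : V →ₗ[ℂ] V)
    (h1 : ∀ a b, D (circ b a) = D (circ a b)) (h2 : ∀ a b, D (circ a b) = circ (D b) a)
    (h3 : ∀ a b, (2 : ℂ) • circ (D b) a + circ a (D b) = 0) : D = 0 := by
  rcases aux_simple circ hs D (fun b hb a => by rw [h1, h2, hb]; simp) with h | h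
  · exact h
  · exfalso
    have hc : ∀ a b, circ a b = circ b a := fun a b =>
      sub_eq_zero.1 (h _ (by rw [map_sub, h1, sub_self]))
    obtain ⟨p, q, hpq⟩ := hs.1
    apply hpq
    apply h
    have := h3 p q
    rw [hc p (D q), ← h2] at this
    linear_combination (norm := module) (1 / 3 : ℂ) • this

theorem aux_D2 {V : Type*} [AddCommGroup V] [Module ℂ V]
    (circ : V →ₗ[ℂ] V →ₗ[ℂ] V) (hs : NovikovSimple circ)
    (hNov2 : ∀ a b c : V, circ (circ a b) c = circ (circ a c) b) (D : V →ₗ[ℂ] V)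
    (h1 : ∀ a b, circ (D b) a = D (circ b a))
    (h2 : ∀ a b, D (circ a b + circ b a)
      = (2 : ℂ) • circ (D b) a + (circ (D b) a + circ a (D b))) : D = 0 := by
  have h3 : ∀ a b, circ a (D b) = D (circ a b - (2 : ℂ) • circ b a) := by
    intro a b
    have := h2 a b
    rw [h1] at this
    simp only [map_add, map_sub, map_smul] at this ⊢
    linear_combination (norm := module) -this
  rcases aux_simple circ hs D (fun b hb a => by
    have e1 := h1 a b
    have e2 := h3 a b
    rw [hb] at e1 e2
    simp only [map_zero, LinearMap.zero_apply, map_sub, map_smul] at e1 e2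
    rw [← e1] at e2
    simp only [smul_zero, sub_zero] at e2
    exact ⟨e1.symm, e2.symm⟩) with h | h
  · exact h
  · exfalso
    have inj : ∀ u v, D u = D v → u = v := fun u v e =>
      sub_eq_zero.1 (h _ (by rw [map_sub, e, sub_self]))
    have as : ∀ a b c, circ (circ b a) c = circ b (circ a c) := by
      intro a b c
      have e := hNov2 a (D b) c
      rw [h3, h1, h3] at e
      have e := inj _ _ e
      simp only [map_sub, map_smul, LinearMap.sub_apply, LinearMap.smul_apply] at e
      rw [hNov2 a b c] at e
      linear_combination (norm := module) (-1 / 2 : ℂ) • e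
    have key : ∀ a b c, circ (circ b a) c + circ (circ a b) c
        = (3 : ℂ) • circ (circ c a) b := by
      intro a b c
      have e := as b a (D c)
      rw [h3, h3, h3] at e
      have e := inj _ _ e
      simp only [map_sub, map_smul, LinearMap.sub_apply, LinearMap.smul_apply, ← as] at e
      rw [hNov2 c b a, hNov2 b c a, hNov2 a c b] at e
      linear_combination (norm := module) (1 / 2 : ℂ) • e
    have triple : ∀ a b c, circ (circ a b) c = 0 := by
      intro a b c
      have k1 := key a b c
      have k2 := key b c a
      have k3 := key a c b
      rw [hNov2 c b a, hNov2 b c a] at k2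
      rw [hNov2 a c b] at k3
      linear_combination (norm := module) (-1 / 4 : ℂ) • k1 + (-1 / 2 : ℂ) • k2 + (-1 / 4 : ℂ) • k3
    obtain ⟨p, q, hpq⟩ := hs.1
    apply hpq
    apply aux_ann circ (Or.inl hs)
    · intro a; exact triple _ _ _
    · intro a; rw [← as]; exact triple _ _ _

/-- Let `(V,∘)` be a Novikov algebra over `ℂ` (possibly
infinite-dimensional, with trivial Lie bracket) such that either `(V,∘)` is simple or
there exist `x ∈ V` and `k ≠ 0` with `b∘x = k·b` for all `b`.  If `(d^i)_{i∈ℕ}` is a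
pointwise finitely supported family of linear maps from `V` into the space of
polynomial maps `ℂ → V` satisfying the Novikov conformal derivation equation (E₀),
then `d^i = 0` for all `i > 3` and `d^0, d^1, d^2, d^3` satisfy (D1)–(D13) with the
Lie bracket taken to be zero. -/
theorem stmt_13 {V : Type*} [AddCommGroup V] [Module ℂ V]
    (circ : V →ₗ[ℂ] V →ₗ[ℂ] V)
    -- Novikov algebra axioms for `∘ = circ`
    (hNov1 : ∀ a b c : V, circ (circ a b) c - circ a (circ b c)
      = circ (circ b a) c - circ b (circ a c))
    (hNov2 : ∀ a b c : V, circ (circ a b) c = circ (circ a c) b)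
    -- `(V,∘)` is simple, or has an element `x` with `b∘x = k·b` for all `b`
    (hcase : NovikovSimple circ
      ∨ ∃ (x : V) (k : ℂ), k ≠ 0 ∧ ∀ b : V, circ b x = k • b)
    (d : ℕ → V →ₗ[ℂ] (ℂ → V))
    -- pointwise finite support in `i`
    (hfin : ∀ a : V, {i : ℕ | d i a ≠ 0}.Finite)
    -- each `d^i(a)` is a polynomial map `ℂ → V`
    (hpoly : ∀ (i : ℕ) (a : V), ∃ (N : ℕ) (v : ℕ → V),
      ∀ t : ℂ, d i a t = ∑ j ∈ Finset.range N, t ^ j • v j)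
    (hE : ConfDerEqNov circ d) :
    (∀ i : ℕ, 3 < i → d i = 0)
      ∧ DIdentities circ (0 : V →ₗ[ℂ] V →ₗ[ℂ] V) d := by
  have hz : ∀ i : ℕ, 3 < i → d i = 0 := by
    intro n hn
    obtain ⟨n, rfl⟩ : ∃ k, n = k + 4 := ⟨n - 4, by omega⟩
    have hb : ∀ v : V, ∃ N, ∀ i, N ≤ i → d i v = 0 := by
      intro v
      obtain ⟨N, hN⟩ := (hfin v).bddAbove
      refine ⟨N + 1, fun i hi => ?_⟩
      by_contra hc
      have := hN hc
      omega
    have main : ∀ (a b : V) (l : ℂ), circ (d (n + 4) b l) a = 0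
        ∧ circ (d (n + 4) b l) a + circ a (d (n + 4) b l) = 0 := by
      intro a b l
      obtain ⟨N1, h1⟩ := hb (circ b a)
      obtain ⟨N2, h2⟩ := hb (circ a b + circ b a)
      obtain ⟨N3, h3⟩ := hb a
      obtain ⟨N4, h4⟩ := hb b
      have H := aux_fin circ d hE a b l (N1 + N2 + N3 + N4 + n + 5)
        (fun i hi => h1 i (by omega)) (fun i hi => h2 i (by omega))
        (fun i hi => h3 i (by omega)) (fun i hi => h4 i (by omega))
      have S := fun φ : Module.Dual ℂ V => aux_scalar' l
        (fun i => φ (d i (circ b a) l)) (fun i => φ (d i (circ a b + circ b a) l))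
        (fun i => φ (circ b (d i a l))) (fun i => φ (circ (d i a l) b + circ b (d i a l)))
        (fun i => φ (circ (d i b l) a)) (fun i => φ (circ (d i b l) a + circ a (d i b l)))
        _ (fun m x => by
          have := congrArg φ (H m x)
          rw [map_add, map_add, map_smul, map_smul, map_sum, map_sum, map_sum, map_sum] at this
          simpa only [map_smul, smul_eq_mul, map_add φ (_ • _) (_ • _)] using this)
        n (by omega)
      exact ⟨(Module.forall_dual_apply_eq_zero_iff ℂ _).1 fun φ => (S φ).1,
        (Module.forall_dual_apply_eq_zero_iff ℂ _).1 fun φ => (S φ).2⟩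
    ext b l
    apply aux_ann circ hcase
    · intro a; exact (main a b l).1
    · intro a
      have := (main a b l).2
      rwa [(main a b l).1, zero_add] at this
  refine ⟨hz, ?_⟩
  have C := fun (a b : V) (l : ℂ) => aux_coeffs l
    (fun i => d i (circ b a) l) (fun i => d i (circ a b + circ b a) l)
    (fun i => circ b (d i a l)) (fun i => circ (d i a l) b + circ b (d i a l))
    (fun i => circ (d i b l) a) (fun i => circ (d i b l) a + circ a (d i b l))
    (aux_fin circ d hE a b l 4 (fun i hi => by rw [hz i hi]; rfl) (fun i hi => by rw [hz i hi]; rfl)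
      (fun i hi => by rw [hz i hi]; rfl) (fun i hi => by rw [hz i hi]; rfl))
  have D1 : ∀ (a b : V) (l : ℂ), d 3 (circ b a) l = d 3 (circ a b) l
      ∧ d 3 (circ a b) l = circ (d 3 b l) a := by
    intro a b l
    obtain ⟨⟨e1, e2, e3, e4, e5⟩, -⟩ := C a b l
    simp only [map_add, Pi.add_apply] at e1 e2 e3
    constructor
    · linear_combination (norm := module) (2 : ℂ) • e1 - e2 - e3
    · linear_combination (norm := module) e2 - e1 + e3
  have D3 : ∀ (a b : V) (l : ℂ), (2 : ℂ) • circ (d 3 b l) a + circ a (d 3 b l) = 0 := by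
    intro a b l
    obtain ⟨⟨e1, e2, e3, e4, e5⟩, -⟩ := C a b l
    linear_combination (norm := module) e3
  -- the extra vanishing needed for (D9)
  have van : ∀ (a : V) (l : ℂ), l • d 3 a l = 0 ∧ l • d 2 a l = 0 := by
    intro a l
    rcases hcase with hs | ⟨x, k, hk, hx⟩
    · have z3 : ∀ v, d 3 v l = 0 := by
        have := aux_D3 circ hs (LinearMap.proj l ∘ₗ d 3)
          (fun a b => (D1 a b l).1) (fun a b => (D1 a b l).2) (fun a b => D3 a b l)
        exact fun v => LinearMap.congr_fun this v
      have z2 : ∀ v, d 2 v l = 0 := by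
        have := aux_D2 circ hs hNov2 (LinearMap.proj l ∘ₗ d 2)
          (fun a b => by
            have := (C a b l).2.1.1
            simp only [z3] at this
            change circ (d 2 b l) a = d 2 (circ b a) l
            linear_combination (norm := module) -this)
          (fun a b => by
            have := (C a b l).2.1.2.1
            change d 2 (circ a b + circ b a) l = _
            simp only [LinearMap.comp_apply, LinearMap.proj_apply]
            linear_combination (norm := module) this)
        exact fun v => LinearMap.congr_fun this v
      simp [z3, z2]
    · have c4 := (C x a l).2.1.1
      have c8 := (C x a l).2.2.1.1
      simp only [hx, map_smul, Pi.smul_apply] at c4 c8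
      constructor
      · apply (smul_eq_zero.1 (_ : k • (l • d 3 a l) = 0)).resolve_left hk
        linear_combination (norm := module) c4
      · apply (smul_eq_zero.1 (_ : k • (l • d 2 a l) = 0)).resolve_left hk
        linear_combination (norm := module) c8
  intro a b l
  have hC := C a b l
  obtain ⟨⟨e1, e2, e3, e4, e5⟩, ⟨f1, f2, f3, f4⟩, ⟨g1, g2, g3⟩, ⟨k1, k2⟩, j1⟩ := hC
  have v3 : l • circ b (d 3 a l) = 0 := by rw [← map_smul, (van a l).1, map_zero]
  have v2 : l • circ b (d 2 a l) = 0 := by rw [← map_smul, (van a l).2, map_zero]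
  have I13 : Finset.Icc (1 : ℕ) 3 = {1, 2, 3} := by decide
  have I23 : Finset.Icc (2 : ℕ) 3 = {2, 3} := by decide
  simp only [I13, I23, Finset.sum_range_succ, Finset.sum_range_zero, LinearMap.zero_apply,
    map_zero, Pi.zero_apply, smul_zero, Finset.sum_const_zero, add_zero, sub_zero, zero_add]
  have s13 : ∀ f : ℕ → V, ∑ i ∈ ({1, 2, 3} : Finset ℕ), f i = f 1 + f 2 + f 3 := by
    intro f; simp [add_assoc]
  simp only [s13, show Nat.choose (1 + 1) 2 = 1 from rfl, show Nat.choose (2 + 1) 2 = 3 from rfl,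
    show Nat.choose (3 + 1) 2 = 6 from rfl]
  push_cast
  refine ⟨D1 a b l, ?_, D3 a b l, ?_, ?_, ?_, ?_, ?_, ?_, ?_, ?_, ?_, ?_⟩
  · linear_combination (norm := module) -e4 + (2 : ℂ) • e3
  · linear_combination (norm := module) f1
  · linear_combination (norm := module) f2
  · linear_combination (norm := module) f3
  · linear_combination (norm := module) f4
  · linear_combination (norm := module) g1
  · linear_combination (norm := module) g2 + v2 - (2 * l) • v3
  · linear_combination (norm := module) g3
  · linear_combination (norm := module) k1
  · linear_combination (norm := module) k2
  · linear_combination (norm := module) j1
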